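/- arXiv:1704.05792 — 2 statements merged into one kernel-verified Lean document; each statement's English description precedes it below -/
import Mathlib

section
/- Theorem 4.1(l): If a locally finite partially ordered set satisfies Axiom D3⁻CF and Axiom NCC, then it satisfies Axiom D3MF and Axiom D3MD. -/
namespace DCompleteStmt

variable {α : Type*}

/-- A vee (d₃⁻-set) `{w; x, y}`: three distinct elements with `w ⋖ x` and `w ⋖ y`. -/
def IsVee [PartialOrder α] (w x y : α) : Prop :=
  x ≠ y ∧ w ⋖ x ∧ w ⋖ y

/-- A diamond `{w; x, y; z}`: four distinct elements with
`w ⋖ x`, `w ⋖ y`, `x ⋖ z`, `y ⋖ z`. -/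
def IsDiamond [PartialOrder α] (w x y z : α) : Prop :=
  x ≠ y ∧ w ⋖ x ∧ w ⋖ y ∧ x ⋖ z ∧ y ⋖ z

/-- A d₃-interval: an interval `[w,z]` that as a set equals a diamond `{w; x, y; z}`. -/
def IsD3Interval [PartialOrder α] (w x y z : α) : Prop :=
  IsDiamond w x y z ∧ Set.Icc w z = {w, x, y, z}

/-- Axiom VT: every vee has a top. -/
def AxVT (α : Type*) [PartialOrder α] : Prop :=
  ∀ w x y : α, IsVee w x y → ∃ z : α, x ⋖ z ∧ y ⋖ z

/-- Axiom NCC: there are no overlapping vees. -/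
def AxNCC (α : Type*) [PartialOrder α] : Prop :=
  ¬ ∃ w w' x y : α, w ≠ w' ∧ x ≠ y ∧ w ⋖ x ∧ w ⋖ y ∧ w' ⋖ x ∧ w' ⋖ y

/-- Property UT: every vee has exactly one top. -/
def PropUT (α : Type*) [PartialOrder α] : Prop :=
  ∀ w x y : α, IsVee w x y → ∃! z : α, x ⋖ z ∧ y ⋖ z

/-- Axiom D3⁻C: every vee has a completing element. -/
def AxD3C (α : Type*) [PartialOrder α] : Prop :=
  ∀ w x y : α, IsVee w x y → ∃ z : α, IsD3Interval w x y z

/-- Property NTC: no element is covered by three pairwise distinct elements. -/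
def PropNTC (α : Type*) [PartialOrder α] : Prop :=
  ¬ ∃ w x y u : α, x ≠ y ∧ x ≠ u ∧ y ≠ u ∧ w ⋖ x ∧ w ⋖ y ∧ w ⋖ u

/-- Property SS: every short interval has cardinality 3 or 4. -/
def PropSS (α : Type*) [PartialOrder α] : Prop :=
  ∀ w u z : α, w ⋖ u → u ⋖ z →
    (Set.Icc w z).ncard = 3 ∨ (Set.Icc w z).ncard = 4

/-- Axiom FT: the top of every diamond covers only the elbows of the diamond. -/
def AxFT (α : Type*) [PartialOrder α] : Prop :=
  ∀ w x y z : α, IsDiamond w x y z → ∀ u : α, u ⋖ z → u = x ∨ u = y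

/-- Axiom D3MF: the maximum of every d₃-interval covers only the elbows. -/
def AxD3MF (α : Type*) [PartialOrder α] : Prop :=
  ∀ w x y z : α, IsD3Interval w x y z → ∀ u : α, u ⋖ z → u = x ∨ u = y

/-- Axiom D3MD: two d₃-intervals with the same maximum element coincide as sets. -/
def AxD3MD (α : Type*) [PartialOrder α] : Prop :=
  ∀ w x y z w' x' y' : α, IsD3Interval w x y z → IsD3Interval w' x' y' z →
    ({w, x, y, z} : Set α) = {w', x', y', z}

/-- Axiom D3⁻CF: every vee has a completing element covering only the elbows. -/
def AxD3CF (α : Type*) [PartialOrder α] : Prop :=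
  ∀ w x y : α, IsVee w x y →
    ∃ z : α, IsD3Interval w x y z ∧ ∀ u : α, u ⋖ z → u = x ∨ u = y

/-- Property DAI: every diamond is an interval. -/
def PropDAI (α : Type*) [PartialOrder α] : Prop :=
  ∀ w x y z : α, IsDiamond w x y z → Set.Icc w z = {w, x, y, z}

/-- Property UC3: every vee has exactly one completing element. -/
def PropUC3 (α : Type*) [PartialOrder α] : Prop :=
  ∀ w x y : α, IsVee w x y → ∃! z : α, IsD3Interval w x y z

/-- Property UPUE: upward propagation of up edges. -/
def PropUPUE (α : Type*) [PartialOrder α] : Prop :=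
  ∀ w x y : α, w ≤ y → w ⋖ x → ¬ x ≤ y → ∃ z : α, y ⋖ z ∧ x ≤ z

/-- A covering chain `a = f 0 ⋖ f 1 ⋖ ⋯ ⋖ f n = b` of length `n`. -/
def IsCovChain [PartialOrder α] (f : ℕ → α) (n : ℕ) (a b : α) : Prop :=
  f 0 = a ∧ f n = b ∧ ∀ i < n, f i ⋖ f (i + 1)

/-- Connectedness via the Hasse diagram (covering graph). -/
def HasseConnected (α : Type*) [PartialOrder α] : Prop :=
  ∀ a b : α, Relation.ReflTransGen (fun u v : α => u ⋖ v ∨ v ⋖ u) a b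

/-- Property UM: a unique maximal element. -/
def PropUM (α : Type*) [PartialOrder α] : Prop :=
  ∃! z : α, IsMax z

/-- Property CLMEE: a unique maximal element, and all covering chains from any
element to it have equal length. -/
def PropCLMEE (α : Type*) [PartialOrder α] : Prop :=
  ∃ z : α, IsMax z ∧ (∀ z' : α, IsMax z' → z' = z) ∧
    ∀ (w : α) (n m : ℕ) (f g : ℕ → α),
      IsCovChain f n w z → IsCovChain g m w z → n = m

/-- The poset is ranked. -/
def IsRanked (α : Type*) [PartialOrder α] : Prop :=
  ∃ ρ : α → ℤ, ∀ x y : α, x ⋖ y → ρ y = ρ x + 1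

/-- Property CLE: whenever `x < y`, all covering chains from `x` to `y`
have equal length. -/
def PropCLE (α : Type*) [PartialOrder α] : Prop :=
  ∀ x y : α, x < y → ∀ (n m : ℕ) (f g : ℕ → α),
    IsCovChain f n x y → IsCovChain g m x y → n = m

section

variable [PartialOrder α] {w w' x y z z' : α}

theorem IsVee.symm (h : IsVee w x y) : IsVee w y x :=
  ⟨h.1.symm, h.2.2, h.2.1⟩

theorem IsDiamond.isVee (h : IsDiamond w x y z) : IsVee w x y :=
  ⟨h.1, h.2.1, h.2.2.1⟩

theorem AxNCC.eq_of_isVee (hNCC : AxNCC α) (h : IsVee w x y) (h' : IsVee w' x y) : w = w' := by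
  by_contra hne
  exact hNCC ⟨w, w', x, y, hne, h.1, h.2.1, h.2.2, h'.2.1, h'.2.2⟩

/- Overlapping vees form a configuration isomorphic to its order dual: distinct `z` and `z'` would
be the elbows of overlapping vees with bottoms `x` and `y`. -/
theorem AxNCC.eq_of_common_upper_covers (hNCC : AxNCC α) (hxy : x ≠ y)
    (hxz : x ⋖ z) (hyz : y ⋖ z) (hxz' : x ⋖ z') (hyz' : y ⋖ z') : z = z' := by
  by_contra hne
  exact hxy (hNCC.eq_of_isVee ⟨hne, hxz, hxz'⟩ ⟨hne, hyz, hyz'⟩)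

theorem AxD3CF.axFT (hD3CF : AxD3CF α) (hNCC : AxNCC α) : AxFT α := by
  rintro w x y z ⟨hxy, hwx, hwy, hxz, hyz⟩
  obtain ⟨t, ⟨⟨-, -, -, hxt, hyt⟩, -⟩, ht⟩ := hD3CF w x y ⟨hxy, hwx, hwy⟩
  have hzt : z = t := hNCC.eq_of_common_upper_covers hxy hxz hyz hxt hyt
  rwa [hzt]

theorem AxFT.axD3MF (hFT : AxFT α) : AxD3MF α :=
  fun w x y z h => hFT w x y z h.1

theorem AxD3MF.setOf_covBy_top (hD3MF : AxD3MF α) (h : IsD3Interval w x y z) :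
    {u | u ⋖ z} = {x, y} := by
  obtain ⟨-, -, -, hxz, hyz⟩ := h.1
  exact Set.Subset.antisymm (hD3MF w x y z h) (Set.pair_subset hxz hyz)

theorem AxD3MF.axD3MD (hD3MF : AxD3MF α) (hNCC : AxNCC α) : AxD3MD α := by
  intro w x y z w' x' y' h h'
  have elbows_eq : ({x, y} : Set α) = {x', y'} :=
    (hD3MF.setOf_covBy_top h).symm.trans (hD3MF.setOf_covBy_top h')
  rcases Set.pair_eq_pair_iff.mp elbows_eq with ⟨rfl, rfl⟩ | ⟨rfl, rfl⟩
  · rw [hNCC.eq_of_isVee h.1.isVee h'.1.isVee]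
  · rw [hNCC.eq_of_isVee h.1.isVee h'.1.isVee.symm, Set.insert_comm x y]

end

theorem stmt_9_general {α : Type*} [PartialOrder α] (hD3CF : AxD3CF α) (hNCC : AxNCC α) :
    AxD3MF α ∧ AxD3MD α :=
  have hD3MF : AxD3MF α := (hD3CF.axFT hNCC).axD3MF
  ⟨hD3MF, hD3MF.axD3MD hNCC⟩

/-- Theorem 4.1(l): D3⁻CF and NCC imply D3MF and D3MD. -/
theorem stmt_9 {α : Type*} [PartialOrder α] (hLF : ∀ a b : α, (Set.Icc a b).Finite)
    (hD3CF : AxD3CF α) (hNCC : AxNCC α) : AxD3MF α ∧ AxD3MD α :=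
  stmt_9_general hD3CF hNCC

end DCompleteStmt
end

section
/- Theorem 4.3(e): If a finite partially ordered set satisfies Axiom D3⁻C and Axiom D3MF, then it satisfies Axiom VT and Axiom FT. -/
namespace DCompleteStmt

variable {α : Type*}

/-!
Three distinct elements, each two of which cover a common element, propagate upwards: under D3⁻CF
the three vees have tops that cover only their elbows, so the tops are again distinct, and each two
of them cover a common one of the original elements. The ascending chain condition therefore
excludes such triples. In particular no element is covered by three others, so nothing but the
elbows lies strictly inside a diamond: every diamond is a d₃-interval, and D3MF becomes FT.
-/

/-- A triangle of vees: three distinct elements, each two of which are the elbows of a vee. The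
three minima of the vees may coincide. -/
def IsVeeTriangle [PartialOrder α] (x y v : α) : Prop :=
  (∃ w, IsVee w x y) ∧ (∃ w, IsVee w x v) ∧ ∃ w, IsVee w y v

section

variable [PartialOrder α] {x y v : α}

theorem AxD3C.axVT (hC : AxD3C α) : AxVT α := fun w x y hvee ↦
  let ⟨z, ⟨_, _, _, hxz, hyz⟩, _⟩ := hC w x y hvee
  ⟨z, hxz, hyz⟩

theorem AxD3C.axD3CF (hC : AxD3C α) (hMF : AxD3MF α) : AxD3CF α := fun w x y hvee ↦
  let ⟨z, hz⟩ := hC w x y hvee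
  ⟨z, hz, hMF w x y z hz⟩

theorem IsVeeTriangle.exists_gt (hCF : AxD3CF α) (h : IsVeeTriangle x y v) :
    ∃ a b c, x < a ∧ IsVeeTriangle a b c := by
  obtain ⟨⟨w₁, hxy⟩, ⟨w₂, hxv⟩, ⟨w₃, hyv⟩⟩ := h
  obtain ⟨a, ⟨⟨-, -, -, hxa, hya⟩, -⟩, ha⟩ := hCF w₁ x y hxy
  obtain ⟨b, ⟨⟨-, -, -, hxb, hvb⟩, -⟩, hb⟩ := hCF w₂ x v hxv
  obtain ⟨c, ⟨⟨-, -, -, hyc, hvc⟩, -⟩, -⟩ := hCF w₃ y v hyv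
  have not_y_covBy_b : ¬ y ⋖ b := fun hyb ↦ (hb y hyb).elim hxy.1.symm hyv.1
  have not_v_covBy_a : ¬ v ⋖ a := fun hva ↦ (ha v hva).elim hxv.1.symm hyv.1.symm
  have hab : a ≠ b := fun hab ↦ not_y_covBy_b (hab ▸ hya)
  have hac : a ≠ c := fun hac ↦ not_v_covBy_a (hac ▸ hvc)
  have hbc : b ≠ c := fun hbc ↦ not_y_covBy_b (hbc ▸ hyc)
  exact ⟨a, b, c, hxa.lt, ⟨x, hab, hxa, hxb⟩, ⟨y, hac, hya, hyc⟩, ⟨v, hbc, hvb, hvc⟩⟩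

theorem AxD3CF.not_isVeeTriangle [WellFoundedGT α] (hCF : AxD3CF α) :
    ¬ IsVeeTriangle x y v := by
  induction x using WellFoundedGT.induction generalizing y v with
  | ind x ih =>
    intro h
    obtain ⟨a, b, c, hxa, habc⟩ := h.exists_gt hCF
    exact ih a hxa habc

theorem AxD3CF.propNTC [WellFoundedGT α] (hCF : AxD3CF α) : PropNTC α := by
  rintro ⟨w, x, y, v, hxy, hxv, hyv, hwx, hwy, hwv⟩
  exact hCF.not_isVeeTriangle ⟨⟨w, hxy, hwx, hwy⟩, ⟨w, hxv, hwx, hwv⟩, ⟨w, hyv, hwy, hwv⟩⟩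

theorem PropNTC.propDAI [IsStronglyAtomic α] (hNTC : PropNTC α) : PropDAI α := by
  rintro w x y z ⟨hxy, hwx, hwy, hxz, hyz⟩
  have hwz : w ≤ z := hwx.le.trans hxz.le
  apply Set.Subset.antisymm
  · rintro e ⟨hwe, hez⟩
    obtain rfl | hwe := hwe.eq_or_lt
    · exact Set.mem_insert _ _
    obtain ⟨v, hwv, hve⟩ := exists_covBy_le_of_lt hwe
    have hv : v = x ∨ v = y := by
      by_contra! hv
      exact hNTC ⟨w, x, y, v, hxy, hv.1.symm, hv.2.symm, hwx, hwy, hwv⟩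
    obtain rfl | rfl := hv
    · obtain rfl | rfl := hxz.eq_or_eq hve hez <;> simp
    · obtain rfl | rfl := hyz.eq_or_eq hve hez <;> simp
  · rintro e (rfl | rfl | rfl | rfl)
    exacts [⟨le_rfl, hwz⟩, ⟨hwx.le, hxz.le⟩, ⟨hwy.le, hyz.le⟩, ⟨hwz, le_rfl⟩]

theorem PropDAI.axFT (hDAI : PropDAI α) (hMF : AxD3MF α) : AxFT α := fun w x y z hd ↦
  hMF w x y z ⟨hd, hDAI w x y z hd⟩

end

theorem stmt_18_general {α : Type*} [PartialOrder α] [WellFoundedGT α] [IsStronglyAtomic α]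
    (hD3C : AxD3C α) (hD3MF : AxD3MF α) : AxVT α ∧ AxFT α := by
  have hNTC : PropNTC α := (hD3C.axD3CF hD3MF).propNTC
  exact ⟨hD3C.axVT, hNTC.propDAI.axFT hD3MF⟩

/-- Theorem 4.3(e): a finite poset with D3⁻C and D3MF satisfies VT and FT. -/
theorem stmt_18 {α : Type*} [PartialOrder α] [Fintype α]
    (hD3C : AxD3C α) (hD3MF : AxD3MF α) : AxVT α ∧ AxFT α :=
  stmt_18_general hD3C hD3MF

end DCompleteStmt
end
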